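/- Let H be a real Hilbert space, let C : H →L H be a continuous linear operator that is coercive, i.e., there is α > 0 with ⟨C v, v⟩ ≥ α‖v‖² for all v ∈ H, and let K : H →L H be a compact operator. Set B = C + K. If B is injective, then B is bounded below: there exists β > 0 such that β‖v‖ ≤ ‖B v‖ for all v ∈ H. -/

import Mathlib

open RealInnerProductSpace

/-! A coercive operator `C` is invertible (Lax–Milgram), so `C + K = C (1 + C⁻¹ K)` with `C⁻¹ K`
compact. If `C + K` is injective, then `-1` is not an eigenvalue of `C⁻¹ K`, and the compactness
argument behind the Fredholm alternative shows that `1 + C⁻¹ K` is bounded below. Hence so is its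
composition with the isomorphism `C`. -/

theorem exists_antilipschitzWith_one_add_of_isCompactOperator {𝕜 E : Type*}
    [NontriviallyNormedField 𝕜] [NormedAddCommGroup E] [NormedSpace 𝕜 E] {T : E →L[𝕜] E}
    (hT : IsCompactOperator T) (hinj : Function.Injective (1 + T : E →L[𝕜] E)) :
    ∃ c, AntilipschitzWith c (1 + T : E →L[𝕜] E) := by
  have not_hasEigenvalue : ¬ Module.End.HasEigenvalue (T : Module.End 𝕜 E) (-1) := by
    intro h
    obtain ⟨v, hv⟩ := h.exists_hasEigenvector
    have hTv : T v = -v := by simpa only [neg_one_smul] using! hv.apply_eq_smul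
    exact hv.2 ((map_eq_zero_iff _ hinj).mp (by simp [hTv]))
  have hsub : T - (-1 : 𝕜) • 1 = 1 + T := by rw [neg_one_smul, sub_neg_eq_add, add_comm]
  exact hsub ▸ hT.antilipschitz_of_not_hasEigenvalue (neg_ne_zero.mpr one_ne_zero) not_hasEigenvalue

theorem fredholm_injective_boundedBelow_general {𝕜 E F : Type*} [NontriviallyNormedField 𝕜]
    [NormedAddCommGroup E] [NormedSpace 𝕜 E] [NormedAddCommGroup F] [NormedSpace 𝕜 F]
    {C K : E →L[𝕜] F} (hC : C.IsInvertible) (hK : IsCompactOperator K)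
    (hinj : Function.Injective (C + K)) :
    ∃ β > (0 : ℝ), ∀ v : E, β * ‖v‖ ≤ ‖(C + K) v‖ := by
  obtain ⟨e, rfl⟩ := hC
  let T : E →L[𝕜] E := (e.symm : F →L[𝕜] E) ∘L K
  have hT : IsCompactOperator T := hK.clm_comp (e.symm : F →L[𝕜] E)
  have factor : ⇑((e : E →L[𝕜] F) + K) = e ∘ (1 + T : E →L[𝕜] E) := by
    ext v
    simp [T]
  rw [factor] at hinj
  obtain ⟨c, hc⟩ := exists_antilipschitzWith_one_add_of_isCompactOperator hT hinj.of_comp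
  rw [← antilipschitzWith_iff_exists_mul_le_norm, factor]
  exact ⟨_, e.antilipschitz.comp hc⟩

theorem isInvertible_of_mul_sq_norm_le_norm_inner {𝕜 H : Type*} [RCLike 𝕜]
    [NormedAddCommGroup H] [InnerProductSpace 𝕜 H] [CompleteSpace H] {C : H →L[𝕜] H} {α : ℝ}
    (hα : 0 < α) (hC : ∀ v, α * ‖v‖ ^ 2 ≤ ‖inner 𝕜 (C v) v‖) : C.IsInvertible := by
  lift α to NNReal using hα.le
  obtain ⟨u, rfl⟩ := C.isUnit_of_forall_le_norm_inner_map (mod_cast hα) fun v ↦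
    (mul_comm _ _).trans_le (hC v)
  exact ⟨ContinuousLinearEquiv.unitsEquiv 𝕜 H u, rfl⟩

/-- **A priori stability bound.**  Let `B = C + K` where `C` is a coercive continuous
linear operator on a real Hilbert space `H` and `K` is a compact operator.  If `B` is
injective, then `B` is bounded below: there exists `β > 0` with `β‖v‖ ≤ ‖B v‖` for
all `v`. -/
theorem fredholm_injective_boundedBelow
    {H : Type*} [NormedAddCommGroup H] [InnerProductSpace ℝ H] [CompleteSpace H]
    (C K : H →L[ℝ] H)
    (α : ℝ) (hα : 0 < α) (hcoer : ∀ v : H, α * ‖v‖ ^ 2 ≤ ⟪C v, v⟫)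
    (hK : IsCompactOperator K) (B : H →L[ℝ] H) (hB : B = C + K)
    (hinj : Function.Injective B) :
    ∃ β > (0 : ℝ), ∀ v : H, β * ‖v‖ ≤ ‖B v‖ := by
  subst hB
  exact fredholm_injective_boundedBelow_general
    (isInvertible_of_mul_sq_norm_le_norm_inner hα fun v ↦ (hcoer v).trans (le_abs_self _)) hK hinj
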